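/- Let Γ be a nonabelian finite subgroup of GL(2,ℂ) which contains no scalar matrix aI with a ≠ 1. Then there exist a natural number n ≥ 1 and a matrix U ∈ GL(2,ℂ) such that U⁻¹ΓU = Γₙ, where, setting ρ = exp(2πi/(2n+1)), Γₙ is the subgroup consisting of the diagonal matrices [[ρ^k, 0], [0, ρ^{−k}]] for 0 ≤ k ≤ 2n together with the antidiagonal matrices [[0, ρ^{−k}], [ρ^k, 0]] for 0 ≤ k ≤ 2n (a group of order 4n+2). -/

import Mathlib

open Matrix

theorem comm_of_comm (A B M : Matrix (Fin 2) (Fin 2) ℂ) (hM : ∀ c : ℂ, M ≠ c • 1)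
    (hA : A * M = M * A) (hB : B * M = M * B) : A * B = B * A := by
  have h0 : M 0 1 ≠ 0 ∨ M 1 0 ≠ 0 ∨ M 0 0 - M 1 1 ≠ 0 := by
    by_contra! h
    apply hM (M 0 0)
    ext i j
    fin_cases i <;> fin_cases j <;> simp [h.1, h.2.1]
    linear_combination -h.2.2
  simp only [← Matrix.ext_iff, Fin.forall_fin_two, Matrix.mul_apply, Fin.sum_univ_two] at *
  obtain ⟨⟨a1, a2⟩, a3, a4⟩ := hA
  obtain ⟨⟨b1, b2⟩, b3, b4⟩ := hB
  rcases h0 with h | h | h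
  all_goals
    refine ⟨⟨?_, ?_⟩, ?_, ?_⟩ <;> apply mul_left_cancel₀ h <;> grind

/-- Averaging argument. -/
theorem exists_commutant {G : Type*} [Group G] [Fintype G] (hodd : Odd (Nat.card G))
    (φ : G →* Matrix (Fin 2) (Fin 2) ℂ) (hdet : ∀ g, (φ g).det = 1) :
    ∃ M : Matrix (Fin 2) (Fin 2) ℂ, (∀ c : ℂ, M ≠ c • 1) ∧ ∀ g, φ g * M = M * φ g := by
  by_contra! hno
  have hsc : ∀ M : Matrix (Fin 2) (Fin 2) ℂ, (∀ g, φ g * M = M * φ g) → ∃ c : ℂ, M = c • 1 := by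
    intro M hM
    by_contra! hc
    obtain ⟨g, hg⟩ := hno M hc
    exact hg (hM g)
  have hinv : ∀ g, φ g⁻¹ = !![φ g 1 1, - φ g 0 1; - φ g 1 0, φ g 0 0] := by
    intro g
    have h1 : φ g * φ g⁻¹ = 1 := by rw [← map_mul]; simp
    have h2 : (φ g).adjugate * φ g = 1 := by rw [Matrix.adjugate_mul, hdet]; simp
    rw [← Matrix.adjugate_fin_two]
    calc φ g⁻¹ = ((φ g).adjugate * φ g) * φ g⁻¹ := by rw [h2, one_mul]
      _ = _ := by rw [mul_assoc, h1, mul_one]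
  -- averaging
  have hav : ∀ X : Matrix (Fin 2) (Fin 2) ℂ, ∃ c : ℂ, ∑ g, φ g * X * φ g⁻¹ = c • 1 := by
    intro X
    apply hsc
    intro h
    rw [Finset.mul_sum, Finset.sum_mul]
    rw [← Equiv.sum_comp (Equiv.mulLeft h) (fun g => φ g * X * φ g⁻¹ * φ h)]
    refine Finset.sum_congr rfl fun g _ => ?_
    simp only [Equiv.coe_mulLeft, _root_.mul_inv_rev, map_mul]
    have : φ h⁻¹ * φ h = 1 := by rw [← map_mul]; simp
    simp only [mul_assoc, this, mul_one]
  set N : ℂ := (Fintype.card G : ℂ) with hN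
  have hN0 : N ≠ 0 := by simp [hN]
  have hd : ∀ g, φ g 0 0 * φ g 1 1 - φ g 0 1 * φ g 1 0 = 1 := by
    intro g; rw [← hdet g, Matrix.det_fin_two]
  have hsd : ∑ g, (φ g 0 0 * φ g 1 1 - φ g 0 1 * φ g 1 0) = N := by
    simp [hd, hN]
  rw [Finset.sum_sub_distrib] at hsd
  obtain ⟨c1, h1⟩ := hav !![1, 0; 0, 0]
  obtain ⟨c2, h2⟩ := hav !![0, 1; 0, 0]
  obtain ⟨c3, h3⟩ := hav !![0, 0; 1, 0]
  obtain ⟨c4, h4⟩ := hav !![0, 0; 0, 1]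
  simp only [← Matrix.ext_iff, Fin.forall_fin_two, Matrix.sum_apply, hinv, Matrix.mul_apply,
    Fin.sum_univ_two] at h1 h2 h3 h4
  simp at h1 h2 h3 h4
  -- the sum
  have hP : ∃ c : ℂ, ∑ g, φ g = c • 1 := by
    apply hsc
    intro h
    rw [Finset.mul_sum, Finset.sum_mul]
    rw [← Equiv.sum_comp (Equiv.mulLeft h) (fun g => φ g * φ h),
      ← Equiv.sum_comp (Equiv.mulRight h) (fun g => φ h * φ g)]
    simp [mul_assoc]
  obtain ⟨c, hc⟩ := hP
  have hcc : c * c = N * c := by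
    have : (∑ g, φ g) * (∑ g, φ g) = N • ∑ g, φ g := by
      rw [Finset.sum_mul]
      have : ∀ h, φ h * ∑ g, φ g = ∑ g, φ g := by
        intro h
        rw [Finset.mul_sum]
        rw [← Equiv.sum_comp (Equiv.mulLeft h) (fun g => φ g)]
        simp
      simp [this, hN, Nat.cast_smul_eq_nsmul]
    rw [hc] at this
    have := congrFun (congrFun this 0) 0
    simpa using this
  have hsq : ∑ g, ((φ g).trace ^ 2 - 2) = ∑ g, (φ g).trace := by
    rw [← Equiv.sum_comp (powCoprime (G := G) (n := 2) (by simpa using hodd.coprime_two_right))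
      (fun g => (φ g).trace)]
    refine Finset.sum_congr rfl fun g _ => ?_
    simp only [powCoprime, Equiv.coe_fn_mk, pow_two, map_mul, Matrix.trace_fin_two,
      Matrix.mul_apply, Fin.sum_univ_two]
    linear_combination 2 * hd g
  have htr : ∑ g, (φ g).trace = 2 * c := by
    rw [← Matrix.trace_sum, hc]; simp; ring
  rw [htr] at hsq
  simp only [Matrix.trace_fin_two] at hsq
  have key : ∑ g, (φ g 0 0 + φ g 1 1)^2 = N := by
    have e : ∀ g, (φ g 0 0 + φ g 1 1)^2 = φ g 0 0 * φ g 1 1 + φ g 0 0 * φ g 0 0 + φ g 1 1 * φ g 1 1 + φ g 0 0 * φ g 1 1 := by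
      intro g; ring
    simp only [e, Finset.sum_add_distrib]
    have h5 : ∑ x, φ x 1 0 * φ x 0 1 = ∑ x, φ x 0 1 * φ x 1 0 := by
      exact Finset.sum_congr rfl fun g _ => by ring
    have h6 := h1.2.2
    rw [h5] at h6
    rw [h2.1.2, h3.2.1]
    linear_combination hsd + h1.1.1 - h6
  rw [Finset.sum_sub_distrib, key] at hsq
  simp [← hN] at hsq
  rcases mul_eq_zero.1 (show c * (c - N) = 0 by linear_combination hcc) with h | h
  · exact hN0 (by linear_combination -hsq - 2 * h)
  · exact hN0 (by linear_combination (-hsq - 2 * h) / 3)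

/-- The hypotheses on the group. -/
def GoodGrp (Γ : Subgroup (GL (Fin 2) ℂ)) : Prop :=
  Finite Γ ∧ (¬ ∀ a ∈ Γ, ∀ b ∈ Γ, a * b = b * a) ∧
    ∀ A ∈ Γ, ∀ a : ℂ, (A : Matrix (Fin 2) (Fin 2) ℂ) = a • (1 : Matrix (Fin 2) (Fin 2) ℂ) → a = 1

/-- The conclusion. -/
def ConclGrp (Γ : Subgroup (GL (Fin 2) ℂ)) : Prop :=
  ∃ n : ℕ, 1 ≤ n ∧ ∃ U : GL (Fin 2) ℂ, ∀ B : GL (Fin 2) ℂ,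
      ((∃ A ∈ Γ, U⁻¹ * A * U = B) ↔
        (∃ k : ℕ, k ≤ 2 * n ∧
          ((B : Matrix (Fin 2) (Fin 2) ℂ) =
              !![(Complex.exp (2 * Real.pi * Complex.I / (2 * n + 1))) ^ k, 0;
                 0, (Complex.exp (2 * Real.pi * Complex.I / (2 * n + 1)))⁻¹ ^ k] ∨
           (B : Matrix (Fin 2) (Fin 2) ℂ) =
              !![0, (Complex.exp (2 * Real.pi * Complex.I / (2 * n + 1)))⁻¹ ^ k;
                 (Complex.exp (2 * Real.pi * Complex.I / (2 * n + 1))) ^ k, 0])))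

/-- The conjugate subgroup. -/
def conjGrp (Γ : Subgroup (GL (Fin 2) ℂ)) (U : GL (Fin 2) ℂ) : Subgroup (GL (Fin 2) ℂ) :=
  Γ.map (MulAut.conj U⁻¹).toMonoidHom

theorem mem_conjGrp {Γ : Subgroup (GL (Fin 2) ℂ)} {U B : GL (Fin 2) ℂ} :
    B ∈ conjGrp Γ U ↔ ∃ A ∈ Γ, U⁻¹ * A * U = B := by
  simp [conjGrp, Subgroup.mem_map]

theorem good_conj {Γ : Subgroup (GL (Fin 2) ℂ)} (h : GoodGrp Γ) (U : GL (Fin 2) ℂ) :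
    GoodGrp (conjGrp Γ U) := by
  obtain ⟨h1, h2, h3⟩ := h
  refine ⟨?_, ?_, ?_⟩
  · exact Finite.of_surjective _ (MonoidHom.subgroupMap_surjective (MulAut.conj U⁻¹).toMonoidHom Γ)
  · intro h
    apply h2
    intro a ha b hb
    have := h (U⁻¹ * a * U) (mem_conjGrp.2 ⟨a, ha, rfl⟩) (U⁻¹ * b * U) (mem_conjGrp.2 ⟨b, hb, rfl⟩)
    have e : U⁻¹ * (a * b) * U = U⁻¹ * (b * a) * U := by
      calc U⁻¹ * (a * b) * U = U⁻¹ * a * U * (U⁻¹ * b * U) := by group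
        _ = _ := this
        _ = _ := by group
    exact mul_left_cancel (mul_right_cancel e)
  · intro B hB a ha
    obtain ⟨A, hA, rfl⟩ := mem_conjGrp.1 hB
    apply h3 A hA a
    have e : A = U * (U⁻¹ * A * U) * U⁻¹ := by group
    rw [e, Units.val_mul, Units.val_mul, ha]
    rw [Matrix.mul_smul, Matrix.smul_mul, mul_one, ← Units.val_mul]
    simp

theorem concl_conj {Γ : Subgroup (GL (Fin 2) ℂ)} (U : GL (Fin 2) ℂ)
    (h : ConclGrp (conjGrp Γ U)) : ConclGrp Γ := by
  obtain ⟨n, hn, V, hV⟩ := h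
  refine ⟨n, hn, U * V, fun B => ?_⟩
  rw [← hV B]
  constructor
  · rintro ⟨A, hA, rfl⟩
    exact ⟨U⁻¹ * A * U, mem_conjGrp.2 ⟨A, hA, rfl⟩, by group⟩
  · rintro ⟨A', hA', rfl⟩
    obtain ⟨A, hA, rfl⟩ := mem_conjGrp.1 hA'
    exact ⟨A, hA, by group⟩

/-- Elements of determinant one commute. -/
theorem good_comm {Γ : Subgroup (GL (Fin 2) ℂ)} (h : GoodGrp Γ) (a b : GL (Fin 2) ℂ)
    (ha : a ∈ Γ) (hb : b ∈ Γ) (ha1 : a.val.det = 1) (hb1 : b.val.det = 1) : a * b = b * a := by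
  obtain ⟨h1, h2, h3⟩ := h
  let S : Subgroup (GL (Fin 2) ℂ) := Γ ⊓ (Matrix.GeneralLinearGroup.det (n := Fin 2) (R := ℂ)).ker
  have hS : ∀ g : GL (Fin 2) ℂ, g ∈ S ↔ g ∈ Γ ∧ g.val.det = 1 := by
    intro g
    simp [S, Subgroup.mem_inf, MonoidHom.mem_ker, Units.ext_iff]
  have hfin : Finite S := Finite.of_injective (Subgroup.inclusion (inf_le_left : S ≤ Γ))
    (Subgroup.inclusion_injective _)
  have := Fintype.ofFinite S
  have hodd : Odd (Nat.card S) := by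
    rw [← Nat.not_even_iff_odd]
    intro he
    obtain ⟨x, hx⟩ := exists_prime_orderOf_dvd_card' (G := S) 2 he.two_dvd
    have hxx : x ^ 2 = 1 := orderOf_dvd_iff_pow_eq_one.1 (dvd_of_eq hx)
    have hx1 : x ≠ 1 := by rintro rfl; simp at hx
    obtain ⟨hxG, hxd⟩ := (hS x).1 x.2
    have hm : x.1.val * x.1.val = 1 := by
      have := congrArg (fun y : S => y.1.val) hxx
      simpa [pow_two] using this
    have hadj : x.1.val = x.1.val.adjugate := by
      have h4 := Matrix.adjugate_mul x.1.val
      rw [hxd, one_smul] at h4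
      calc x.1.val = (x.1.val.adjugate * x.1.val) * x.1.val := by rw [h4, one_mul]
        _ = _ := by rw [mul_assoc, hm, mul_one]
    rw [Matrix.adjugate_fin_two] at hadj
    have e00 := congrFun (congrFun hadj 0) 0
    have e01 := congrFun (congrFun hadj 0) 1
    have e10 := congrFun (congrFun hadj 1) 0
    simp only [Matrix.of_apply, Matrix.cons_val', Matrix.cons_val_zero, Matrix.cons_val_one,
      Matrix.cons_val_fin_one] at e00 e01 e10
    have z01 : x.1.val 0 1 = 0 := by linear_combination e01 / 2
    have z10 : x.1.val 1 0 = 0 := by linear_combination e10 / 2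
    have hs : x.1.val = (x.1.val 0 0) • (1 : Matrix (Fin 2) (Fin 2) ℂ) := by
      ext i j
      fin_cases i <;> fin_cases j
      · simp
      · simp [z01]
      · simp [z10]
      · simp only [Matrix.smul_apply]
        simpa using e00.symm
    have h5 := h3 _ hxG _ hs
    apply hx1
    rw [h5, one_smul] at hs
    exact Subtype.ext (Units.ext hs)
  obtain ⟨M, hM, hc⟩ := exists_commutant hodd
    ((Units.coeHom (Matrix (Fin 2) (Fin 2) ℂ)).comp S.subtype) (fun g => ((hS g.1).1 g.2).2)
  apply Units.ext
  exact comm_of_comm _ _ M hM (hc ⟨a, (hS a).2 ⟨ha, ha1⟩⟩) (hc ⟨b, (hS b).2 ⟨hb, hb1⟩⟩)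

theorem good_exists {Γ : Subgroup (GL (Fin 2) ℂ)} (h : GoodGrp Γ) :
    ∃ s ∈ Γ, s.val.det = 1 ∧ s ≠ 1 := by
  obtain ⟨h1, h2, h3⟩ := h
  push Not at h2
  obtain ⟨a, ha, b, hb, hab⟩ := h2
  refine ⟨a * b * (a⁻¹ * b⁻¹), Γ.mul_mem (Γ.mul_mem ha hb) (Γ.mul_mem (Γ.inv_mem ha) (Γ.inv_mem hb)), ?_, ?_⟩
  · have : Matrix.GeneralLinearGroup.det (a * b * (a⁻¹ * b⁻¹)) = 1 := by
      simp only [map_mul, map_inv]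
      rw [mul_mul_mul_comm]; simp
    exact congrArg Units.val this
  · intro h
    apply hab
    have : a * b = (a⁻¹ * b⁻¹)⁻¹ := eq_inv_of_mul_eq_one_left h
    rw [this]; group

/-- Diagonalization. -/
theorem diag_conj (s : GL (Fin 2) ℂ) (hd : s.val.det = 1) (hfin : IsOfFinOrder s)
    (hns : ∀ c : ℂ, s.val ≠ c • 1) :
    ∃ U : GL (Fin 2) ℂ, ∃ l m : ℂ, l ≠ m ∧ l * m = 1 ∧ (U⁻¹ * s * U).val = !![l, 0; 0, m] := by
  set A := s.val with hA
  obtain ⟨l, hl⟩ : ∃ l : ℂ, l * l - A.trace * l + 1 = 0 := by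
    obtain ⟨r, hr⟩ := IsAlgClosed.exists_pow_nat_eq (k := ℂ) (A.trace ^ 2 - 4) (n := 2) (by norm_num)
    exact ⟨(A.trace + r) / 2, by linear_combination hr / 4⟩
  rw [Matrix.trace_fin_two] at hl
  rw [Matrix.det_fin_two] at hd
  set m := A 0 0 + A 1 1 - l with hm
  have hlm : l * m = 1 := by rw [hm]; linear_combination -hl
  have hne : l ≠ m := by
    intro he
    obtain ⟨k, hk, hk1⟩ := isOfFinOrder_iff_pow_eq_one.1 hfin
    have hAk : A ^ k = 1 := by
      rw [hA, ← Units.val_pow_eq_pow_val, hk1]; rfl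
    have hll : l * l = 1 := by rw [← hlm, ← he]
    have hl0 : l ≠ 0 := by rintro rfl; simp at hll
    have h2l : A 0 0 + A 1 1 = 2 * l := by linear_combination -he - hm
    have hN : (A - l • 1) * A = l • (A - l • 1) := by
      ext i j
      fin_cases i <;> fin_cases j <;>
        simp [Matrix.mul_apply, Fin.sum_univ_two, Matrix.one_apply]
      · linear_combination A 0 0 * h2l - hd + hll
      · linear_combination A 0 1 * h2l
      · linear_combination A 1 0 * h2l
      · linear_combination A 1 1 * h2l - hd + hll
    have hpow : ∀ k : ℕ, A ^ k = (l ^ k) • 1 + ((k : ℂ) * l ^ (k + 1)) • (A - l • 1) := by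
      intro k
      induction k with
      | zero => simp
      | succ k ih =>
        rw [pow_succ, ih, add_mul, smul_mul_assoc, smul_mul_assoc, hN, one_mul]
        ext i j
        simp only [Matrix.add_apply, Matrix.smul_apply, Matrix.sub_apply, smul_eq_mul]
        push_cast
        linear_combination (- (A i j - l * (1 : Matrix (Fin 2) (Fin 2) ℂ) i j) * l ^ k) * hll
    rw [hpow k] at hAk
    have hk0 : ((k : ℂ) * l ^ (k + 1)) ≠ 0 := by
      simp [hl0]; omega
    apply hns (((k : ℂ) * l ^ (k + 1))⁻¹ * (1 - l ^ k) + l)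
    have : A - l • 1 = ((k : ℂ) * l ^ (k + 1))⁻¹ • (((k : ℂ) * l ^ (k + 1)) • (A - l • 1)) := by
      rw [smul_smul, inv_mul_cancel₀ hk0, one_smul]
    rw [eq_sub_of_add_eq' hAk] at this
    rw [sub_eq_iff_eq_add.1 this, add_smul, mul_smul, sub_smul, one_smul]
  have hv : ∀ x : ℂ, x * x - (A 0 0 + A 1 1) * x + 1 = 0 → ∃ v : Fin 2 → ℂ, v ≠ 0 ∧
      A 0 0 * v 0 + A 0 1 * v 1 = x * v 0 ∧ A 1 0 * v 0 + A 1 1 * v 1 = x * v 1 := by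
    intro x hx
    have : (A - x • 1).det = 0 := by
      rw [Matrix.det_fin_two]
      simp
      linear_combination hx + hd
    obtain ⟨v, hv0, hv⟩ := Matrix.exists_mulVec_eq_zero_iff.2 this
    refine ⟨v, hv0, ?_, ?_⟩
    · have := congrFun hv 0
      simp [Matrix.mulVec, dotProduct, Fin.sum_univ_two] at this
      linear_combination this
    · have := congrFun hv 1
      simp [Matrix.mulVec, dotProduct, Fin.sum_univ_two] at this
      linear_combination this
  obtain ⟨v, hv0, v1, v2⟩ := hv l hl
  obtain ⟨w, hw0, w1, w2⟩ := hv m (by rw [hm]; linear_combination hl)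
  have hdet : (!![v 0, w 0; v 1, w 1] : Matrix (Fin 2) (Fin 2) ℂ).det ≠ 0 := by
    rw [Matrix.det_fin_two]
    simp
    intro h
    have hsub : l - m ≠ 0 := sub_ne_zero.2 hne
    have a1 : v 0 * w 0 = 0 := by
      apply mul_left_cancel₀ hsub
      linear_combination -w 0 * v1 + v 0 * w1 - A 0 1 * h
    have a2 : v 1 * w 1 = 0 := by
      apply mul_left_cancel₀ hsub
      linear_combination -w 1 * v2 + v 1 * w2 + A 1 0 * h
    have a3 : v 0 * w 1 = 0 := by
      apply mul_left_cancel₀ hsub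
      linear_combination -w 1 * v1 + v 1 * w1 + (A 0 0 - m) * h
    have a4 : v 1 * w 0 = 0 := by linear_combination a3 - h
    have : v 0 ≠ 0 ∨ v 1 ≠ 0 := by
      by_contra! hh
      exact hv0 (by ext i; fin_cases i <;> simp [hh.1, hh.2])
    apply hw0
    ext i
    rcases this with h0 | h0 <;> fin_cases i <;> simp_all
  let U := Matrix.GeneralLinearGroup.mkOfDetNeZero _ hdet
  refine ⟨U, l, m, hne, hlm, ?_⟩
  have hU : U.val = !![v 0, w 0; v 1, w 1] := rfl
  have e : A * U.val = U.val * !![l, 0; 0, m] := by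
    rw [hU]
    ext i j
    fin_cases i <;> fin_cases j <;> simp [Matrix.mul_apply, Fin.sum_univ_two]
    · linear_combination v1
    · linear_combination w1
    · linear_combination v2
    · linear_combination w2
  rw [mul_assoc, Units.val_mul, Units.val_mul, ← hA, e, ← mul_assoc, ← Units.val_mul]
  simp

theorem exists_delta : ∃ δ : ℂˣ →* GL (Fin 2) ℂ,
    ∀ a, (δ a).val = !![(a : ℂ), 0; 0, ((a⁻¹ : ℂˣ) : ℂ)] := by
  let δ : ℂˣ →* GL (Fin 2) ℂ :=
    { toFun := fun a => ⟨!![(a : ℂ), 0; 0, ((a⁻¹ : ℂˣ) : ℂ)], !![((a⁻¹ : ℂˣ) : ℂ), 0; 0, (a : ℂ)],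
        by ext i j; fin_cases i <;> fin_cases j <;> simp [Matrix.mul_apply, Fin.sum_univ_two],
        by ext i j; fin_cases i <;> fin_cases j <;> simp [Matrix.mul_apply, Fin.sum_univ_two]⟩
      map_one' := by
        apply Units.ext
        ext i j; fin_cases i <;> fin_cases j <;> simp
      map_mul' := by
        intro a b
        apply Units.ext
        ext i j; fin_cases i <;> fin_cases j <;>
          simp [Matrix.mul_apply, Fin.sum_univ_two, mul_comm] }
  exact ⟨δ, fun a => rfl⟩

/-- Normal form reached: swap in the group, monomial matrices only. -/
theorem final_form {Γ : Subgroup (GL (Fin 2) ℂ)} (h : GoodGrp Γ) (t : GL (Fin 2) ℂ) (ht : t ∈ Γ)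
    (htv : t.val = !![0, 1; 1, 0])
    (hmono : ∀ g ∈ Γ, (g.val 0 1 = 0 ∧ g.val 1 0 = 0) ∨ (g.val 0 0 = 0 ∧ g.val 1 1 = 0)) :
    ConclGrp Γ := by
  obtain ⟨h1, h2, h3⟩ := h
  -- the diagonal elements have determinant one
  have hdiag : ∀ g ∈ Γ, g.val 0 1 = 0 → g.val 1 0 = 0 → g.val 0 0 * g.val 1 1 = 1 := by
    intro g hg e1 e2
    have := h3 ((t * g) * (t * g)) (Γ.mul_mem (Γ.mul_mem ht hg) (Γ.mul_mem ht hg))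
      (g.val 0 0 * g.val 1 1)
    apply this
    have eg : g.val = !![g.val 0 0, 0; 0, g.val 1 1] := by
      conv_lhs => rw [Matrix.eta_fin_two g.val, e1, e2]
    generalize g.val 0 0 = a at *
    generalize g.val 1 1 = d at *
    simp only [Units.val_mul, htv, eg]
    ext i j
    fin_cases i <;> fin_cases j <;> simp [Matrix.mul_apply, Fin.sum_univ_two, mul_comm]
  obtain ⟨δ, hδ⟩ := exists_delta
  let H : Subgroup ℂˣ := Γ.comap δ
  have hδinj : Function.Injective δ := by
    intro a b hab
    have := congrArg (fun u : GL (Fin 2) ℂ => u.val 0 0) hab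
    simp only [hδ] at this
    exact Units.ext (by simpa using this)
  have hHfin : Finite H := by
    apply Finite.of_injective (fun x : H => (⟨δ x.1, x.2⟩ : Γ))
    intro x y hxy
    exact Subtype.ext (hδinj (congrArg Subtype.val hxy))
  set N := Nat.card H with hN
  have hNpos : 0 < N := Nat.card_pos
  have : NeZero N := ⟨hNpos.ne'⟩
  have hle : H ≤ rootsOfUnity N ℂ := by
    intro a ha
    rw [mem_rootsOfUnity]
    have := pow_card_eq_one' (x := (⟨a, ha⟩ : H))
    exact congrArg Subtype.val this
  have hHeq : H = rootsOfUnity N ℂ :=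
    Subgroup.eq_of_le_of_card_ge hle (by rw [Complex.card_rootsOfUnity])
  have hodd : Odd N := by
    rw [← Nat.not_even_iff_odd]
    intro he
    have hm : (-1 : ℂˣ) ∈ H := by
      rw [hHeq, mem_rootsOfUnity]; exact he.neg_one_pow
    have := h3 (δ (-1)) hm (-1) (by
      rw [hδ]
      ext i j; fin_cases i <;> fin_cases j <;> simp)
    norm_num at this
  -- classification of elements
  have hcl1 : ∀ g ∈ Γ, g.val 0 1 = 0 → g.val 1 0 = 0 → ∃ a ∈ H, g = δ a := by
    intro g hg e1 e2
    have hd := hdiag g hg e1 e2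
    have hga : g = δ (Units.mk0 (g.val 0 0) (left_ne_zero_of_mul_eq_one hd)) := by
      have hi : (g.val 0 0)⁻¹ = g.val 1 1 := inv_eq_of_mul_eq_one_right hd
      apply Units.ext
      rw [hδ, Units.val_inv_eq_inv_val, Units.val_mk0, hi]
      conv_lhs => rw [Matrix.eta_fin_two g.val, e1, e2]
    refine ⟨_, ?_, hga⟩
    change δ _ ∈ Γ
    rw [← hga]; exact hg
  have htt : t * t = 1 := by
    apply Units.ext
    rw [Units.val_mul, htv]
    ext i j; fin_cases i <;> fin_cases j <;> simp [Matrix.mul_apply, Fin.sum_univ_two]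
  have hcl : ∀ g ∈ Γ, ∃ a ∈ H, g = δ a ∨ g = t * δ a := by
    intro g hg
    rcases hmono g hg with ⟨e1, e2⟩ | ⟨e1, e2⟩
    · obtain ⟨a, ha, hga⟩ := hcl1 g hg e1 e2
      exact ⟨a, ha, Or.inl hga⟩
    · obtain ⟨a, ha, hga⟩ := hcl1 (t * g) (Γ.mul_mem ht hg)
        (by simp only [Units.val_mul, Matrix.mul_apply, Fin.sum_univ_two, htv, e2]; simp)
        (by simp only [Units.val_mul, Matrix.mul_apply, Fin.sum_univ_two, htv, e1]; simp)
      refine ⟨a, ha, Or.inr ?_⟩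
      rw [← hga, ← mul_assoc, htt, one_mul]
  obtain ⟨n, hn⟩ := hodd
  have hn1 : 1 ≤ n := by
    by_contra hc
    have hN1 : N = 1 := by omega
    apply h2
    have h1' : ∀ a ∈ H, a = 1 := by
      intro a ha
      rw [hHeq, mem_rootsOfUnity, hN1, pow_one] at ha
      exact ha
    intro x hx y hy
    obtain ⟨a, ha, hxa⟩ := hcl x hx
    obtain ⟨b, hb, hyb⟩ := hcl y hy
    rw [h1' a ha, map_one, mul_one] at hxa
    rw [h1' b hb, map_one, mul_one] at hyb
    rcases hxa with rfl | rfl <;> rcases hyb with rfl | rfl <;> simp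
  have hprim := Complex.isPrimitiveRoot_exp N hNpos.ne'
  have hcast : (N : ℂ) = 2 * n + 1 := by rw [hn]; push_cast; ring
  rw [hcast] at hprim
  have hHk : ∀ a : ℂˣ, a ∈ H ↔ ∃ k ≤ 2 * n, 
      (a : ℂ) = Complex.exp (2 * Real.pi * Complex.I / (2 * n + 1)) ^ k := by
    intro a
    rw [hHeq, mem_rootsOfUnity']
    constructor
    · intro ha
      obtain ⟨i, hi, hia⟩ := hprim.eq_pow_of_pow_eq_one ha
      exact ⟨i, by omega, hia.symm⟩
    · rintro ⟨k, -, hk⟩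
      rw [hk, pow_right_comm, hprim.pow_eq_one, one_pow]
  have htδ : ∀ a, (t * δ a).val = !![0, ((a⁻¹ : ℂˣ) : ℂ); (a : ℂ), 0] := by
    intro a
    rw [Units.val_mul, htv, hδ]
    ext i j; fin_cases i <;> fin_cases j <;> simp [Matrix.mul_apply, Fin.sum_univ_two]
  refine ⟨n, hn1, 1, fun B => ?_⟩
  simp only [inv_one, one_mul, mul_one, exists_eq_right]
  constructor
  · intro hB
    obtain ⟨a, ha, hBa⟩ := hcl B hB
    obtain ⟨k, hk, hak⟩ := (hHk a).1 ha
    refine ⟨k, hk, ?_⟩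
    rcases hBa with rfl | rfl
    · left
      rw [hδ, Units.val_inv_eq_inv_val, hak, inv_pow]
    · right
      rw [htδ, Units.val_inv_eq_inv_val, hak, inv_pow]
  · rintro ⟨k, hk, hB⟩
    let a : ℂˣ := Units.mk0 (Complex.exp (2 * Real.pi * Complex.I / (2 * n + 1)) ^ k)
      (pow_ne_zero _ (Complex.exp_ne_zero _))
    have ha : a ∈ H := (hHk a).2 ⟨k, hk, rfl⟩
    rcases hB with hB | hB
    · have : B = δ a := by
        apply Units.ext
        rw [hB, hδ, Units.val_inv_eq_inv_val, inv_pow]; rfl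
      rw [this]; exact ha
    · have : B = t * δ a := by
        apply Units.ext
        rw [hB, htδ, Units.val_inv_eq_inv_val, inv_pow]; rfl
      rw [this]; exact Γ.mul_mem ht ha

theorem mono_form {Γ : Subgroup (GL (Fin 2) ℂ)} (h : GoodGrp Γ) (s : GL (Fin 2) ℂ) (hs : s ∈ Γ)
    (l m : ℂ) (hlm : l ≠ m) (hlm1 : l * m = 1) (hsv : s.val = !![l, 0; 0, m]) :
    ∀ g ∈ Γ, (g.val 0 1 = 0 ∧ g.val 1 0 = 0) ∨ (g.val 0 0 = 0 ∧ g.val 1 1 = 0) := by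
  have hsd : s.val.det = 1 := by rw [hsv, Matrix.det_fin_two]; simpa using hlm1
  intro g hg
  have hs' : g * s * g⁻¹ ∈ Γ := Γ.mul_mem (Γ.mul_mem hg hs) (Γ.inv_mem hg)
  have hd' : (g * s * g⁻¹).val.det = 1 := by
    rw [Units.val_mul, Units.val_mul, Matrix.det_mul, Matrix.det_mul, hsd, mul_one,
      ← Matrix.det_mul, ← Units.val_mul]
    simp
  have hc : (g * s * g⁻¹).val * s.val = s.val * (g * s * g⁻¹).val :=
    congrArg Units.val (good_comm h _ _ hs' hs hd' hsd)
  have hr : (g * s * g⁻¹).val * g.val = g.val * s.val := by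
    rw [← Units.val_mul, ← Units.val_mul]; congr 1; group
  generalize (g * s * g⁻¹).val = X at *
  have hgd : g.val 0 0 * g.val 1 1 - g.val 0 1 * g.val 1 0 ≠ 0 := by
    rw [← Matrix.det_fin_two]
    exact (Matrix.isUnits_det_units g).ne_zero
  rw [hsv] at hc hr
  generalize g.val = M at *
  rw [Matrix.det_fin_two] at hd'
  simp only [← Matrix.ext_iff, Fin.forall_fin_two, Matrix.mul_apply, Fin.sum_univ_two,
    Matrix.of_apply, Matrix.cons_val', Matrix.cons_val_zero, Matrix.cons_val_one,
      Matrix.cons_val_fin_one, mul_zero, zero_mul, add_zero, zero_add] at hc hr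
  obtain ⟨⟨-, c1⟩, c2, -⟩ := hc
  obtain ⟨⟨r1, r2⟩, r3, r4⟩ := hr
  have hsub : l - m ≠ 0 := sub_ne_zero.2 hlm
  have x01 : X 0 1 = 0 := by
    apply mul_left_cancel₀ hsub
    linear_combination -c1
  have x10 : X 1 0 = 0 := by
    apply mul_left_cancel₀ hsub
    linear_combination c2
  rw [x01] at r1 r2 hd'
  rw [x10] at r3 r4
  by_cases ha : M 0 0 = 0
  · right
    refine ⟨ha, ?_⟩
    have hb : M 0 1 ≠ 0 := by
      intro hb; apply hgd; rw [ha, hb]; ring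
    have hcc : M 1 0 ≠ 0 := by
      intro hb; apply hgd; rw [ha, hb]; ring
    have : X 1 1 = l := mul_right_cancel₀ hcc (by linear_combination r3)
    rw [this] at r4
    apply mul_left_cancel₀ hsub
    linear_combination r4
  · left
    have x0 : X 0 0 = l := mul_right_cancel₀ ha (by linear_combination r1)
    have hl0 : l ≠ 0 := left_ne_zero_of_mul_eq_one hlm1
    have x1 : X 1 1 = m := by
      apply mul_left_cancel₀ hl0
      rw [x0] at hd'
      linear_combination hd' - hlm1
    rw [x0] at r2
    rw [x1] at r3
    constructor
    · apply mul_left_cancel₀ hsub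
      linear_combination r2
    · apply mul_left_cancel₀ hsub
      linear_combination -r3

theorem good_concl {Γ : Subgroup (GL (Fin 2) ℂ)} (h : GoodGrp Γ) : ConclGrp Γ := by
  obtain ⟨s, hs, hsd, hs1⟩ := good_exists h
  have hfo : IsOfFinOrder s := by
    have := h.1
    have h4 := isOfFinOrder_of_finite (⟨s, hs⟩ : Γ)
    exact Submonoid.isOfFinOrder_coe.2 h4
  obtain ⟨U, l, m, hlm, hlm1, hU⟩ := diag_conj s hsd hfo (by
    intro c hc
    have := h.2.2 s hs c hc
    rw [this, one_smul] at hc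
    exact hs1 (Units.ext hc))
  apply concl_conj U
  have h' := good_conj h U
  have hmono := mono_form h' _ (mem_conjGrp.2 ⟨s, hs, rfl⟩) l m hlm hlm1 hU
  clear hU hfo hs1 hsd hs h
  generalize conjGrp Γ U = Δ at *
  -- an antidiagonal element
  obtain ⟨t, ht, t00, t11⟩ : ∃ t ∈ Δ, t.val 0 0 = 0 ∧ t.val 1 1 = 0 := by
    by_contra! hno
    apply h'.2.1
    have hdg : ∀ g ∈ Δ, g.val 0 1 = 0 ∧ g.val 1 0 = 0 := by
      intro g hg
      rcases hmono g hg with h | h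
      · exact h
      · exact absurd h.2 (hno g hg h.1)
    intro a ha b hb
    obtain ⟨a1, a2⟩ := hdg a ha
    obtain ⟨b1, b2⟩ := hdg b hb
    apply Units.ext
    ext i j
    fin_cases i <;> fin_cases j <;>
      simp only [Units.val_mul, Matrix.mul_apply, Fin.sum_univ_two, Fin.zero_eta, Fin.mk_one,
        a1, a2, b1, b2] <;> ring
  have hbc : t.val 0 1 * t.val 1 0 = 1 := by
    apply h'.2.2 (t * t) (Δ.mul_mem ht ht)
    ext i j
    fin_cases i <;> fin_cases j <;>
      simp only [Units.val_mul, Matrix.mul_apply, Fin.sum_univ_two, Fin.zero_eta, Fin.mk_one,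
        t00, t11, Matrix.smul_apply] <;> simp [mul_comm]
  have hc0 : t.val 1 0 ≠ 0 := right_ne_zero_of_mul_eq_one hbc
  have hdet : (!![1, 0; 0, t.val 1 0] : Matrix (Fin 2) (Fin 2) ℂ).det ≠ 0 := by
    rw [Matrix.det_fin_two]; simpa using hc0
  let V := Matrix.GeneralLinearGroup.mkOfDetNeZero _ hdet
  have hV : V.val = !![1, 0; 0, t.val 1 0] := rfl
  have hVi : (V⁻¹).val = !![1, 0; 0, (t.val 1 0)⁻¹] := by
    have e : V.val * !![1, 0; 0, (t.val 1 0)⁻¹] = 1 := by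
      rw [hV]
      ext i j
      fin_cases i <;> fin_cases j <;> simp [Matrix.mul_apply, Fin.sum_univ_two, hc0]
    exact Units.inv_eq_of_mul_eq_one_right e
  have hVg : ∀ g : GL (Fin 2) ℂ, (V⁻¹ * g * V).val =
      !![g.val 0 0, g.val 0 1 * t.val 1 0; (t.val 1 0)⁻¹ * g.val 1 0, g.val 1 1] := by
    intro g
    rw [Units.val_mul, Units.val_mul, hV, hVi, Matrix.eta_fin_two g.val]
    ext i j
    fin_cases i <;> fin_cases j <;> simp [Matrix.mul_apply, Fin.sum_univ_two]
    field_simp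
  apply concl_conj V
  refine final_form (good_conj h' V) (V⁻¹ * t * V) (mem_conjGrp.2 ⟨t, ht, rfl⟩) ?_ ?_
  · rw [hVg, t00, t11, hbc, inv_mul_cancel₀ hc0]
  · intro g hg
    obtain ⟨g, hg1, rfl⟩ := mem_conjGrp.1 hg
    rw [hVg]
    rcases hmono g hg1 with ⟨e1, e2⟩ | ⟨e1, e2⟩
    · left; rw [e1, e2]; simp
    · right; rw [e1, e2]; simp

/-- Let `Γ` be a nonabelian finite subgroup of `GL(2,ℂ)` which contains no scalar matrix `aI`
with `a ≠ 1`. Then there exist `n ≥ 1` and `U ∈ GL(2,ℂ)` such that `U⁻¹ Γ U = Γₙ`, where,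
with `ρ = exp(2πi/(2n+1))`, `Γₙ` consists of the diagonal matrices `[[ρᵏ,0],[0,ρ⁻ᵏ]]` and the
antidiagonal matrices `[[0,ρ⁻ᵏ],[ρᵏ,0]]` for `0 ≤ k ≤ 2n`. -/
theorem nonabelian_finite_subgroup_GL2_no_scalar_conj_dihedral
    (Γ : Subgroup (GL (Fin 2) ℂ)) [Finite Γ]
    (hnab : ¬ ∀ a ∈ Γ, ∀ b ∈ Γ, a * b = b * a)
    (hsc : ∀ A ∈ Γ, ∀ a : ℂ, (A : Matrix (Fin 2) (Fin 2) ℂ) = a • (1 : Matrix (Fin 2) (Fin 2) ℂ)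
      → a = 1) :
    ∃ n : ℕ, 1 ≤ n ∧ ∃ U : GL (Fin 2) ℂ, ∀ B : GL (Fin 2) ℂ,
      ((∃ A ∈ Γ, U⁻¹ * A * U = B) ↔
        (∃ k : ℕ, k ≤ 2 * n ∧
          ((B : Matrix (Fin 2) (Fin 2) ℂ) =
              !![(Complex.exp (2 * Real.pi * Complex.I / (2 * n + 1))) ^ k, 0;
                 0, (Complex.exp (2 * Real.pi * Complex.I / (2 * n + 1)))⁻¹ ^ k] ∨
           (B : Matrix (Fin 2) (Fin 2) ℂ) =
              !![0, (Complex.exp (2 * Real.pi * Complex.I / (2 * n + 1)))⁻¹ ^ k;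
                 (Complex.exp (2 * Real.pi * Complex.I / (2 * n + 1))) ^ k, 0]))) := by
  exact good_concl ⟨inferInstance, hnab, hsc⟩
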